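/- Explicit fourth-derivative integral of the quintic Townes soliton (Appendix D): Let R(y) := 3^{1/4} (sech(2y))^{1/2}, the positive solution of −R'' + R − R⁵ = 0 on ℝ, and let G(y) := −(1/2)(R(y)/2 + y R'(y)). Then ∫_ℝ R''''(y) · G(y) dy = −(11√3/16) π, where R'''' is the fourth derivative of R. Equivalently, ∫_ℝ R''''(y) (R(y)/2 + y R'(y)) dy = (11√3/8) π. -/

import Mathlib

open Real

/-!
The operators `D_c f = c f + x f'` generate dilations of the line, and satisfy `∂ D_c = D_{c+1} ∂`
together with the virial identity `∫ f D_c f = (c - 1/2) ∫ f²`. Moving two derivatives across by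
parts therefore gives `∫ f'''' D_{1/2} f = ∫ f'' D_{5/2} f'' = 2 ∫ (f'')²` for every Schwartz `f`.
For the quintic soliton the equation `R'' = R - R⁵` and `R² = √3 sech (2x)` turn `(R'')²` into a
polynomial in `sech (2x)`. Its moments follow from `∫ sech = π` by the recursion obtained from
integrating `(sech ^ p)'' = p² sech ^ p - p (p + 1) sech ^ (p + 2)`.
-/

open MeasureTheory SchwartzMap Polynomial Filter
open scoped Nat ContDiff Topology

section Dilation

/-- The generator `f ↦ c f + x f'` of the dilations `f ↦ λ ^ c f(λ x)` at `λ = 1`, acting on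
Schwartz functions. -/
noncomputable def dilationGenerator (c : ℝ) : 𝓢(ℝ, ℝ) →L[ℝ] 𝓢(ℝ, ℝ) :=
  c • ContinuousLinearMap.id ℝ _ + smulLeftCLM ℝ (fun x : ℝ => x) ∘L derivCLM ℝ ℝ

variable (c : ℝ) (f g : 𝓢(ℝ, ℝ)) (n : ℕ)

theorem dilationGenerator_apply (x : ℝ) : dilationGenerator c f x = c * f x + x * deriv f x := by
  simp [dilationGenerator, smulLeftCLM_apply_apply Function.HasTemperateGrowth.id']

theorem derivCLM_dilationGenerator :
    derivCLM ℝ ℝ (dilationGenerator c f) = dilationGenerator (c + 1) (derivCLM ℝ ℝ f) := by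
  ext x
  have hD : ⇑(dilationGenerator c f) = fun x => c * f x + x * deriv f x :=
    funext (dilationGenerator_apply c f)
  have h := ((f.hasDerivAt x).const_mul c).fun_add
    ((hasDerivAt_id' x).fun_mul ((derivCLM ℝ ℝ f).hasDerivAt x))
  rw [derivCLM_apply, hD, dilationGenerator_apply]
  refine h.deriv.trans ?_
  rw [derivCLM_apply]
  ring

theorem iterate_derivCLM_dilationGenerator :
    (derivCLM ℝ ℝ)^[n] (dilationGenerator c f) =
      dilationGenerator (c + n) ((derivCLM ℝ ℝ)^[n] f) := by
  induction n with
  | zero => simp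
  | succ n ih =>
    rw [Function.iterate_succ_apply', ih, derivCLM_dilationGenerator,
      ← Function.iterate_succ_apply' (derivCLM ℝ ℝ)]
    push_cast
    rw [add_assoc]

theorem coe_iterate_derivCLM : ⇑((derivCLM ℝ ℝ)^[n] f) = deriv^[n] f := by
  induction n with
  | zero => rfl
  | succ n ih =>
    rw [Function.iterate_succ_apply', Function.iterate_succ_apply', ← ih]
    rfl

theorem integrable_schwartzMap_mul : Integrable fun x => f x * g x :=
  (pairing (ContinuousLinearMap.mul ℝ ℝ) f g).integrable

theorem integral_iterate_derivCLM_mul :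
    ∫ x, (derivCLM ℝ ℝ)^[n] f x * g x = (-1) ^ n * ∫ x, f x * (derivCLM ℝ ℝ)^[n] g x := by
  induction n generalizing g with
  | zero => simp
  | succ n ih =>
    have hparts := integral_mul_deriv_eq_neg_deriv_mul ((derivCLM ℝ ℝ)^[n] f) g
    simp only [← derivCLM_apply (𝕜 := ℝ)] at hparts
    rw [ih] at hparts
    simp only [Function.iterate_succ_apply' _ n f, Function.iterate_succ_apply _ n g]
    rw [pow_succ]
    linarith

theorem integral_mul_dilationGenerator_self :
    ∫ x, f x * dilationGenerator c f x = (c - 1 / 2) * ∫ x, f x ^ 2 := by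
  have hsq : Integrable fun x => f x ^ 2 := by
    simpa only [sq] using integrable_schwartzMap_mul f f
  have hmul : Integrable fun x => x * f x * f x := by
    simpa [smulLeftCLM_apply_apply Function.HasTemperateGrowth.id'] using
      integrable_schwartzMap_mul (smulLeftCLM ℝ (fun x : ℝ => x) f) f
  have hderiv : ∀ x, HasDerivAt (fun x => x * f x * f x)
      (2 * (f x * dilationGenerator (1 / 2) f x)) x := fun x => by
    refine (((hasDerivAt_id' x).fun_mul (f.hasDerivAt x)).fun_mul (f.hasDerivAt x)).congr_deriv ?_
    rw [dilationGenerator_apply]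
    ring
  have hhalf := integral_eq_zero_of_hasDerivAt_of_integrable hderiv
    ((integrable_schwartzMap_mul f _).const_mul 2) hmul
  have hsplit : ∀ x, f x * dilationGenerator c f x =
      (c - 1 / 2) * f x ^ 2 + f x * dilationGenerator (1 / 2) f x := fun x => by
    simp only [dilationGenerator_apply]
    ring
  rw [integral_const_mul] at hhalf
  simp only [hsplit]
  rw [integral_add (hsq.const_mul _) (integrable_schwartzMap_mul f _), integral_const_mul]
  linarith

theorem integral_iterate_deriv_mul_dilationGenerator :
    ∫ x, deriv^[n + n] f x * dilationGenerator c f x =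
      (-1) ^ n * (c + n - 1 / 2) * ∫ x, (deriv^[n] f x) ^ 2 := by
  rw [← coe_iterate_derivCLM, ← coe_iterate_derivCLM, Function.iterate_add_apply,
    integral_iterate_derivCLM_mul, iterate_derivCLM_dilationGenerator,
    integral_mul_dilationGenerator_self, mul_assoc]

end Dilation

section Sech

/-- The hyperbolic secant. -/
noncomputable def sech (x : ℝ) : ℝ := 1 / cosh x

theorem sech_pos (x : ℝ) : 0 < sech x := one_div_pos.2 (cosh_pos x)

theorem tanh_sq_eq_one_sub_sech_sq (x : ℝ) : tanh x ^ 2 = 1 - sech x ^ 2 := by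
  have := (cosh_pos x).ne'
  rw [tanh_eq_sinh_div_cosh, sech, div_pow, div_pow, sinh_sq]
  field_simp

theorem sech_le_two_mul_exp_neg_abs (x : ℝ) : sech x ≤ 2 * exp (-|x|) := by
  have hcosh : exp |x| / 2 ≤ cosh x := by
    rw [← cosh_abs, cosh_eq]
    linarith [exp_pos (-|x|)]
  calc sech x ≤ 1 / (exp |x| / 2) := one_div_le_one_div_of_le (by positivity) hcosh
    _ = 2 * exp (-|x|) := by rw [one_div_div, exp_neg, div_eq_mul_inv]

theorem contDiff_sech {n : WithTop ℕ∞} : ContDiff ℝ n sech :=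
  contDiff_const.div contDiff_cosh fun x => (cosh_pos x).ne'

theorem hasDerivAt_sech (x : ℝ) : HasDerivAt sech (-tanh x * sech x) x := by
  refine ((hasDerivAt_const x 1).div (hasDerivAt_cosh x) (cosh_pos x).ne').congr_deriv ?_
  rw [tanh_eq_sinh_div_cosh, sech]
  ring

theorem hasDerivAt_tanh (x : ℝ) : HasDerivAt tanh (1 - tanh x ^ 2) x := by
  have hquot := (hasDerivAt_sinh x).div (hasDerivAt_cosh x) (cosh_pos x).ne'
  have htanh : tanh = sinh / cosh := funext tanh_eq_sinh_div_cosh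
  rw [htanh]
  refine hquot.congr_deriv ?_
  have := (cosh_pos x).ne'
  simp only [Pi.div_apply]
  field_simp

theorem hasDerivAt_sech_rpow (p x : ℝ) :
    HasDerivAt (fun x => sech x ^ p) (-(p * tanh x) * sech x ^ p) x := by
  refine ((hasDerivAt_sech x).rpow_const (.inl (sech_pos x).ne')).congr_deriv ?_
  rw [rpow_sub_one (sech_pos x).ne']
  have := (sech_pos x).ne'
  field_simp

theorem exists_iteratedDeriv_sech_rpow_eq (p : ℝ) (n : ℕ) :
    ∃ q : ℝ[X], iteratedDeriv n (fun x => sech x ^ p) = fun x => q.eval (tanh x) * sech x ^ p := by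
  induction n with
  | zero => exact ⟨1, by simp⟩
  | succ n ih =>
    obtain ⟨q, hq⟩ := ih
    refine ⟨derivative q * (1 - X ^ 2) - C p * X * q, ?_⟩
    ext x
    rw [iteratedDeriv_succ, hq]
    have h := ((q.hasDerivAt (tanh x)).comp x (hasDerivAt_tanh x)).fun_mul
      (hasDerivAt_sech_rpow p x)
    refine h.deriv.trans ?_
    simp only [Function.comp_apply, eval_sub, eval_mul, eval_pow, eval_one, eval_X, eval_C]
    ring

theorem exists_abs_pow_mul_sech_rpow_le {p : ℝ} (hp : 0 < p) (k : ℕ) :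
    ∃ C, ∀ x, |x| ^ k * sech x ^ p ≤ C := by
  refine ⟨k ! / p ^ k * 2 ^ p, fun x => ?_⟩
  have hpow : |x| ^ k ≤ k ! / p ^ k * exp (p * |x|) := by
    have := pow_div_factorial_le_exp (p * |x|) (by positivity) k
    rw [mul_pow, div_le_iff₀ (by positivity)] at this
    rw [div_mul_eq_mul_div, le_div_iff₀ (by positivity)]
    linarith
  have hsech : sech x ^ p ≤ 2 ^ p * exp (-(p * |x|)) := by
    calc sech x ^ p ≤ (2 * exp (-|x|)) ^ p :=
          rpow_le_rpow (sech_pos x).le (sech_le_two_mul_exp_neg_abs x) hp.le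
      _ = 2 ^ p * exp (-(p * |x|)) := by
          rw [mul_rpow zero_le_two (exp_pos _).le, ← exp_mul, neg_mul, mul_comm p]
  calc |x| ^ k * sech x ^ p
      ≤ k ! / p ^ k * exp (p * |x|) * (2 ^ p * exp (-(p * |x|))) :=
        mul_le_mul hpow hsech (rpow_nonneg (sech_pos x).le p) (by positivity)
    _ = k ! / p ^ k * 2 ^ p * (exp (p * |x|) * exp (-(p * |x|))) := by ring
    _ = k ! / p ^ k * 2 ^ p := by rw [← exp_add, add_neg_cancel, exp_zero, mul_one]

/-- The Schwartz function `sech ^ p`, for a real exponent `p > 0`. -/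
noncomputable def sechRpow (p : ℝ) (hp : 0 < p) : 𝓢(ℝ, ℝ) where
  toFun x := sech x ^ p
  smooth' := contDiff_sech.rpow_const_of_ne fun x => (sech_pos x).ne'
  decay' k n := by
    obtain ⟨q, hq⟩ := exists_iteratedDeriv_sech_rpow_eq p n
    obtain ⟨A, hA⟩ := (isCompact_Icc (a := (-1 : ℝ)) (b := 1)).exists_bound_of_continuousOn
      q.continuous.continuousOn
    obtain ⟨B, hB⟩ := exists_abs_pow_mul_sech_rpow_le hp k
    refine ⟨A * B, fun x => ?_⟩
    have hq_le : ‖q.eval (tanh x)‖ ≤ A := hA _ (abs_le.1 (abs_tanh_lt_one x).le)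
    have hrpow : 0 ≤ sech x ^ p := rpow_nonneg (sech_pos x).le p
    rw [norm_iteratedFDeriv_eq_norm_iteratedDeriv, hq, norm_mul, norm_of_nonneg hrpow,
      mul_left_comm]
    exact mul_le_mul hq_le (hB x) (by positivity) ((norm_nonneg _).trans hq_le)

theorem coe_sechRpow {p : ℝ} (hp : 0 < p) : ⇑(sechRpow p hp) = fun x => sech x ^ p := rfl

theorem integrable_sech_rpow {p : ℝ} (hp : 0 < p) : Integrable fun x => sech x ^ p :=
  (sechRpow p hp).integrable

theorem integrable_sech_pow {n : ℕ} (hn : 0 < n) : Integrable fun x => sech x ^ n := by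
  simpa using integrable_sech_rpow (p := n) (mod_cast hn)

theorem iterate_deriv_two_sech_rpow (p : ℝ) :
    deriv^[2] (fun x => sech x ^ p) =
      fun x => p ^ 2 * sech x ^ p - p * (p + 1) * sech x ^ (p + 2) := by
  have hderiv : deriv (fun x => sech x ^ p) = fun x => -(p * tanh x) * sech x ^ p :=
    funext fun x => (hasDerivAt_sech_rpow p x).deriv
  ext x
  have h := ((hasDerivAt_tanh x).const_mul p).fun_neg.fun_mul (hasDerivAt_sech_rpow p x)
  simp only [Function.iterate_succ_apply, Function.iterate_zero_apply, hderiv]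
  refine h.deriv.trans ?_
  rw [rpow_add (sech_pos x), rpow_two]
  linear_combination (p ^ 2 + p) * sech x ^ p * tanh_sq_eq_one_sub_sech_sq x

theorem integral_sech_rpow_add_two {p : ℝ} (hp : 0 < p) :
    ∫ x, sech x ^ (p + 2) = p / (p + 1) * ∫ x, sech x ^ p := by
  have hzero : ∫ x, deriv^[2] (fun x => sech x ^ p) x = 0 := by
    let f' := derivCLM ℝ ℝ (sechRpow p hp)
    exact integral_eq_zero_of_hasDerivAt_of_integrable f'.hasDerivAt
      (derivCLM ℝ ℝ f').integrable f'.integrable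
  rw [iterate_deriv_two_sech_rpow, integral_sub ((integrable_sech_rpow hp).const_mul _)
    ((integrable_sech_rpow (by positivity)).const_mul _), integral_const_mul,
    integral_const_mul] at hzero
  field_simp
  nlinarith

theorem integral_sech : ∫ x, sech x = π := by
  have hderiv : ∀ x, HasDerivAt (fun x => arctan (sinh x)) (sech x) x := fun x => by
    refine (hasDerivAt_sinh x).arctan.congr_deriv ?_
    have := (cosh_pos x).ne'
    rw [add_comm, ← cosh_sq, sech]
    field_simp
  have hbot : Tendsto (fun x => arctan (sinh x)) atBot (𝓝 (-(π / 2))) :=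
    (tendsto_nhds_of_tendsto_nhdsWithin tendsto_arctan_atBot).comp sinhOrderIso.tendsto_atBot
  have htop : Tendsto (fun x => arctan (sinh x)) atTop (𝓝 (π / 2)) :=
    (tendsto_nhds_of_tendsto_nhdsWithin tendsto_arctan_atTop).comp sinhOrderIso.tendsto_atTop
  have hint : Integrable sech := by simpa using integrable_sech_pow one_pos
  rw [integral_of_hasDerivAt_of_tendsto hderiv hint hbot htop]
  ring

theorem integral_sech_pow_add_two {n : ℕ} (hn : 0 < n) :
    ∫ x, sech x ^ (n + 2) = n / (n + 1) * ∫ x, sech x ^ n := by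
  have := integral_sech_rpow_add_two (p := n) (mod_cast hn)
  exact_mod_cast this

end Sech

section Soliton

/-- The ground state of the one-dimensional focusing nonlinear Schrödinger equation with
nonlinearity `|u| ^ (2 * σ) * u` and frequency `-1`. -/
noncomputable def soliton (σ x : ℝ) : ℝ :=
  (σ + 1) ^ (1 / (2 * σ)) * sech (σ * x) ^ (1 / σ)

/-- `soliton σ` as a Schwartz function. -/
noncomputable def solitonSchwartz (σ : ℝ) (hσ : 0 < σ) : 𝓢(ℝ, ℝ) :=
  ((σ + 1) ^ (1 / (2 * σ)) : ℝ) • compCLMOfContinuousLinearEquiv ℝ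
    (ContinuousLinearEquiv.smulLeft (Units.mk0 σ hσ.ne')) (sechRpow (1 / σ) (one_div_pos.2 hσ))

variable {σ : ℝ}

theorem coe_solitonSchwartz (hσ : 0 < σ) : ⇑(solitonSchwartz σ hσ) = soliton σ := rfl

theorem soliton_pos (hσ : 0 < σ) (x : ℝ) : 0 < soliton σ x :=
  mul_pos (rpow_pos_of_pos (by positivity) _) (rpow_pos_of_pos (sech_pos _) _)

theorem soliton_rpow_two_mul (hσ : 0 < σ) (x : ℝ) :
    soliton σ x ^ (2 * σ) = (σ + 1) * sech (σ * x) ^ 2 := by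
  have hs := sech_pos (σ * x)
  rw [soliton, mul_rpow (by positivity) (by positivity), ← rpow_mul (by positivity),
    ← rpow_mul hs.le, one_div_mul_cancel (by positivity), rpow_one,
    show 1 / σ * (2 * σ) = 2 by field_simp, rpow_two]

theorem iterate_deriv_two_soliton (hσ : 0 < σ) :
    deriv^[2] (soliton σ) = fun x => soliton σ x - soliton σ x ^ (2 * σ + 1) := by
  ext x
  have hscale := congrFun (iteratedDeriv_comp_const_mul (n := 2)
    ((sechRpow (1 / σ) (one_div_pos.2 hσ)).smooth 2) σ) x
  calc deriv^[2] (soliton σ) x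
      = (σ + 1) ^ (1 / (2 * σ)) * iteratedDeriv 2 (fun x => sech (σ * x) ^ (1 / σ)) x := by
        rw [← iteratedDeriv_eq_iterate, ← iteratedDeriv_const_mul_field]
        rfl
    _ = (σ + 1) ^ (1 / (2 * σ)) *
          (σ ^ 2 * deriv^[2] (fun x => sech x ^ (1 / σ)) (σ * x)) := by
        rw [← iteratedDeriv_eq_iterate]
        exact congrArg _ hscale
    _ = soliton σ x - (σ + 1) * sech (σ * x) ^ 2 * soliton σ x := by
        simp only [iterate_deriv_two_sech_rpow, rpow_add (sech_pos _), rpow_two, soliton]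
        field_simp
        ring
    _ = soliton σ x - soliton σ x ^ (2 * σ + 1) := by
        rw [rpow_add_one (soliton_pos hσ x).ne', soliton_rpow_two_mul hσ]

end Soliton

section Quintic

theorem soliton_two_pow_four (x : ℝ) : soliton 2 x ^ 4 = 3 * sech (2 * x) ^ 2 := by
  have h := soliton_rpow_two_mul two_pos x
  norm_num at h
  exact h

theorem soliton_two_sq (x : ℝ) : soliton 2 x ^ 2 = √3 * sech (2 * x) := by
  refine (pow_left_inj₀ (by positivity)
    (mul_nonneg (sqrt_nonneg 3) (sech_pos _).le) two_ne_zero).1 ?_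
  rw [← pow_mul, soliton_two_pow_four, mul_pow, sq_sqrt zero_le_three]

theorem iterate_deriv_two_soliton_two (x : ℝ) :
    deriv^[2] (soliton 2) x = soliton 2 x - soliton 2 x ^ 5 := by
  rw [iterate_deriv_two_soliton two_pos]
  norm_num

theorem iterate_deriv_two_soliton_two_sq (x : ℝ) :
    (deriv^[2] (soliton 2) x) ^ 2 =
      √3 * (sech (2 * x) - 6 * sech (2 * x) ^ 3 + 9 * sech (2 * x) ^ 5) := by
  calc (deriv^[2] (soliton 2) x) ^ 2 = soliton 2 x ^ 2 * (1 - soliton 2 x ^ 4) ^ 2 := by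
        rw [iterate_deriv_two_soliton_two]
        ring
    _ = √3 * (sech (2 * x) - 6 * sech (2 * x) ^ 3 + 9 * sech (2 * x) ^ 5) := by
        rw [soliton_two_sq, soliton_two_pow_four]
        ring

theorem integral_iterate_deriv_two_soliton_two_sq :
    ∫ x, (deriv^[2] (soliton 2) x) ^ 2 = 11 * √3 / 16 * π := by
  have hone : Integrable fun x => sech x := by simpa using integrable_sech_pow one_pos
  have hthree := (integrable_sech_pow three_pos).const_mul 6
  have hsub : Integrable fun x => sech x - 6 * sech x ^ 3 := hone.sub hthree
  have hfive := (integrable_sech_pow (n := 5) (by norm_num)).const_mul 9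
  have hI₃ : ∫ x, sech x ^ 3 = 1 / 2 * π := by
    simpa [integral_sech, one_add_one_eq_two] using integral_sech_pow_add_two one_pos
  have hI₅ : ∫ x, sech x ^ 5 = 3 / 8 * π := by
    rw [integral_sech_pow_add_two three_pos, hI₃]
    norm_num
    ring
  calc ∫ x, (deriv^[2] (soliton 2) x) ^ 2
      = √3 * ∫ x, (sech (2 * x) - 6 * sech (2 * x) ^ 3 + 9 * sech (2 * x) ^ 5) := by
        simp only [iterate_deriv_two_soliton_two_sq, integral_const_mul]
    _ = √3 / 2 * ∫ x, (sech x - 6 * sech x ^ 3 + 9 * sech x ^ 5) := by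
        rw [Measure.integral_comp_mul_left fun x => sech x - 6 * sech x ^ 3 + 9 * sech x ^ 5,
          smul_eq_mul, abs_of_pos (by norm_num), ← mul_assoc, div_eq_mul_inv]
    _ = √3 / 2 * (π - 6 * (1 / 2 * π) + 9 * (3 / 8 * π)) := by
        rw [integral_add hsub hfive, integral_sub hone hthree, integral_const_mul,
          integral_const_mul, integral_sech, hI₃, hI₅]
    _ = 11 * √3 / 16 * π := by ring

end Quintic

/-- Explicit fourth-derivative integral of the quintic Townes soliton
`R(y) = 3^(1/4) sech(2y)^(1/2)` against `G(y) = -(1/2)(R(y)/2 + y R'(y))`: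
`∫ R'''' · G = -(11√3/16)π`. -/
theorem townes_fourth_derivative_integral (R G : ℝ → ℝ)
    (hR : ∀ y : ℝ, R y = 3 ^ ((1 : ℝ) / 4) * (1 / Real.cosh (2 * y)) ^ ((1 : ℝ) / 2))
    (hG : ∀ y : ℝ, G y = -(1 / 2) * (R y / 2 + y * deriv R y)) :
    ∫ y : ℝ, (deriv^[4] R) y * G y = -(11 * Real.sqrt 3 / 16) * Real.pi := by
  let S := solitonSchwartz 2 two_pos
  have hRS : R = S := by
    ext y
    rw [hR, coe_solitonSchwartz, soliton, sech]
    norm_num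
  have hGS : ∀ y, G y = -(1 / 2) * dilationGenerator (1 / 2) S y := fun y => by
    rw [hG, hRS, dilationGenerator_apply]
    ring
  calc ∫ y, deriv^[4] R y * G y
      = -(1 / 2) * ∫ y, deriv^[2 + 2] S y * dilationGenerator (1 / 2) S y := by
        simp only [hRS, hGS, mul_left_comm _ (-(1 / 2) : ℝ), integral_const_mul]
    _ = -∫ y, (deriv^[2] S y) ^ 2 := by
        rw [integral_iterate_deriv_mul_dilationGenerator]
        norm_num
        ring
    _ = -(11 * √3 / 16) * π := by
        rw [coe_solitonSchwartz, integral_iterate_deriv_two_soliton_two_sq]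
        ring
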